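/- arXiv:2201.04264 — 2 statements merged into one kernel-verified Lean document; each statement's English description precedes it below -/
import Mathlib

section
/- Let z* ∈ X and assume z − z* ∈ T₀(z*) for every z ∈ X. If there exist u* ∈ ℝ^s with u* ≥ 0 and v* ∈ ℝ^r (not necessarily nonnegative) such that ∇g(z*) + Σᵢ uᵢ* ∇gᵢ(z*) + Σⱼ vⱼ* ∇hⱼ(z*) = 0 and uᵢ* gᵢ(z*) = 0 for every i = 1,…,s, then g(z*) ≤ g(z) for every z ∈ X. -/
/-!
On the linearized directions at `zs`, complementary slackness turns `G i zs + ∇G i zs d ≤ 0` into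
`u i * ∇G i zs d ≤ 0`, so stationarity of the Lagrangian leaves `0 ≤ ∇g zs d`. A convex function
lies above its tangent, hence `g` does not decrease from `zs` in any such direction.
-/

section LinearizedDirections

variable {R E ι κ : Type*} [CommRing R] [PartialOrder R] [TopologicalSpace R]
  [AddCommMonoid E] [Module R E] [TopologicalSpace E]

/-- The directions along which the linearized constraints `c i + a i d ≤ 0` and `b j d = 0` hold.
The set `T₀(z)` of directions at a point `z` is the case `c i = G i z`, with `a i` and `b j` the
derivatives of `G i` and `H j` at `z`. -/
def linearizedDirections (c : ι → R) (a : ι → E →L[R] R) (b : κ → E →L[R] R) : Set E :=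
  {d | (∀ i, c i + a i d ≤ 0) ∧ ∀ j, b j d = 0}

theorem nonneg_of_mem_linearizedDirections [IsOrderedRing R] [IsTopologicalRing R]
    [Fintype ι] [Fintype κ]
    {c : ι → R} {a : ι → E →L[R] R} {b : κ → E →L[R] R} {φ : E →L[R] R} {u : ι → R} {v : κ → R}
    (hu : ∀ i, 0 ≤ u i) (hstat : φ + ∑ i, u i • a i + ∑ j, v j • b j = 0)
    (hcomp : ∀ i, u i * c i = 0) {d : E} (hd : d ∈ linearizedDirections c a b) :
    0 ≤ φ d := by
  obtain ⟨hineq, heq⟩ := hd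
  have hslack (i : ι) : u i * a i d ≤ 0 := by
    simpa only [mul_add, hcomp, zero_add] using
      mul_nonpos_of_nonneg_of_nonpos (hu i) (hineq i)
  have hbalance : φ d + ∑ i, u i * a i d = 0 := by
    simpa [heq] using DFunLike.congr_fun hstat d
  rw [eq_neg_of_add_eq_zero_left hbalance]
  exact neg_nonneg.mpr (Finset.sum_nonpos fun i _ => hslack i)

end LinearizedDirections

section Convex

variable {E : Type*} [NormedAddCommGroup E] [NormedSpace ℝ E] {S : Set E} {f : E → ℝ}
  {f' : E →L[ℝ] ℝ} {x : E}

theorem add_hasFDerivWithinAt_sub_le_of_convexOn (hf : ConvexOn ℝ S f)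
    (hf' : HasFDerivWithinAt f f' S x) (hx : x ∈ S) {y : E} (hy : y ∈ S) :
    f x + f' (y - x) ≤ f y := by
  let line : ℝ →ᵃ[ℝ] E := AffineMap.lineMap x y
  have hconvex : ConvexOn ℝ (line ⁻¹' S) (f ∘ line) := hf.comp_affineMap line
  have hderiv : HasDerivWithinAt (f ∘ line) (f' (y - x)) (line ⁻¹' S) 0 :=
    hf'.comp_hasDerivWithinAt_of_eq 0 AffineMap.hasDerivWithinAt_lineMap
      (Set.mapsTo_preimage line S) (by simp [line])
  have hslope : f' (y - x) ≤ slope (f ∘ line) 0 1 :=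
    hconvex.le_slope_of_hasDerivWithinAt (by simpa [line]) (by simpa [line]) one_pos hderiv
  have hslope_eq : slope (f ∘ line) 0 1 = f y - f x := by simp [slope_def_field, line]
  linarith

theorem isMinOn_of_convexOn_of_forall_hasFDerivWithinAt_nonneg (hf : ConvexOn ℝ S f)
    (hf' : HasFDerivWithinAt f f' S x) (hx : x ∈ S) {X : Set E} (hXS : X ⊆ S)
    (hnonneg : ∀ y ∈ X, 0 ≤ f' (y - x)) : IsMinOn f X x :=
  isMinOn_iff.mpr fun y hy =>
    (le_add_of_nonneg_right (hnonneg y hy)).trans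
      (add_hasFDerivWithinAt_sub_le_of_convexOn hf hf' hx (hXS hy))

end Convex

theorem stmt_7_general {E ι κ : Type*} [NormedAddCommGroup E] [NormedSpace ℝ E]
    [Fintype ι] [Fintype κ] {S X : Set E} {g : E → ℝ} {G : ι → E → ℝ} {H : κ → E → ℝ}
    {g' : E →L[ℝ] ℝ} {G' : ι → E →L[ℝ] ℝ} {H' : κ → E →L[ℝ] ℝ} {zs : E}
    (hg : ConvexOn ℝ S g) (hg' : HasFDerivWithinAt g g' S zs)
    (hG' : ∀ i, HasFDerivAt (G i) (G' i) zs) (hH' : ∀ j, HasFDerivAt (H j) (H' j) zs)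
    (hzs : zs ∈ S) (hXS : X ⊆ S)
    (hdir : ∀ z ∈ X, z - zs ∈ linearizedDirections (fun i => G i zs) G' H')
    {u : ι → ℝ} {v : κ → ℝ} (hu : ∀ i, 0 ≤ u i)
    (hstat : g' + ∑ i, u i • G' i + ∑ j, v j • H' j = 0) (hcomp : ∀ i, u i * G i zs = 0) :
    IsMinOn g X zs :=
  isMinOn_of_convexOn_of_forall_hasFDerivWithinAt_nonneg hg hg' hzs hXS fun z hz =>
    nonneg_of_mem_linearizedDirections hu hstat hcomp (hdir z hz)

/-- Theorem 5: assume every feasible direction `z − zs` (for `z ∈ X`) lies in the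
cone `T₀(zs)`. If KKT multipliers `u ≥ 0` and `v ∈ ℝ^r` (not necessarily
nonnegative) exist, then `zs` is a global minimizer of `g` over `X`. -/
theorem stmt_7 {n s r : ℕ}
    (g : EuclideanSpace ℝ (Fin n) → ℝ)
    (G : Fin s → EuclideanSpace ℝ (Fin n) → ℝ)
    (H : Fin r → EuclideanSpace ℝ (Fin n) → ℝ)
    (hg : ConvexOn ℝ Set.univ g) (hgd : Differentiable ℝ g)
    (hG : ∀ i, ConvexOn ℝ Set.univ (G i)) (hGd : ∀ i, Differentiable ℝ (G i))
    (hH : ∀ j, ConvexOn ℝ Set.univ (H j)) (hHd : ∀ j, Differentiable ℝ (H j))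
    (X : Set (EuclideanSpace ℝ (Fin n)))
    (hX : X = {z | (∀ i, G i z ≤ 0) ∧ (∀ j, H j z = 0)})
    (zs : EuclideanSpace ℝ (Fin n)) (hzs : zs ∈ X)
    (T₀ : Set (EuclideanSpace ℝ (Fin n)))
    (hT₀ : T₀ = {d | (∀ i, G i zs + fderiv ℝ (G i) zs d ≤ 0) ∧
                     (∀ j, fderiv ℝ (H j) zs d = 0)})
    (hdir : ∀ z ∈ X, (z - zs) ∈ T₀)
    (u : Fin s → ℝ) (v : Fin r → ℝ) (hu : ∀ i, 0 ≤ u i)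
    (hstat : fderiv ℝ g zs + ∑ i, u i • fderiv ℝ (G i) zs
        + ∑ j, v j • fderiv ℝ (H j) zs = 0)
    (hcomp : ∀ i, u i * G i zs = 0) :
    ∀ z ∈ X, g zs ≤ g z := by
  subst hT₀
  exact isMinOn_iff.mp <| stmt_7_general hg (hgd zs).hasFDerivAt.hasFDerivWithinAt
    (fun i => (hGd i zs).hasFDerivAt) (fun j => (hHd j zs).hasFDerivAt) (Set.mem_univ zs)
    (Set.subset_univ X) hdir hu hstat hcomp
end

section
/- Let z* ∈ X, u* ∈ ℝ^s with u* ≥ 0 and v* ∈ ℝ^r. If g(z*) ≤ L(z; u*, v*) for every z ∈ E (i.e. g(z*) equals the dual value θ(u*, v*)), then: (a) ∇g(z*) + Σᵢ uᵢ* ∇gᵢ(z*) + Σⱼ vⱼ* ∇hⱼ(z*) = 0; (b) uᵢ* gᵢ(z*) = 0 for every i = 1,…,s; and (c) g(z*) ≤ g(z) for every z ∈ X, i.e. z* is a global optimal solution of minimizing g over X. -/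
/-!
Weak duality makes the objective an upper bound for the Lagrangian on the feasible set. If the
value of the objective at a feasible point `z₀` is in turn a lower bound for the Lagrangian
everywhere, then the two functions agree at `z₀`, so `z₀` is a global minimizer of the Lagrangian
and its derivative vanishes there. Equality of the two values also forces a sum of nonpositive
terms `u i * G i z₀` to vanish, hence each of them to vanish.
-/

section Duality

variable {E R ι κ : Type*} {G : ι → E → R} {H : κ → E → R} {u : ι → R} {z : E}

/-- The feasible set of an optimization problem with inequality constraints `G i z ≤ 0` and equality
constraints `H j z = 0`. -/
def feasibleSet [Zero R] [LE R] (G : ι → E → R) (H : κ → E → R) : Set E :=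
  {z | (∀ i, G i z ≤ 0) ∧ ∀ j, H j z = 0}

variable [Semiring R] [Fintype ι] [Fintype κ]

/-- The Lagrange function of the objective `g` with inequality constraints `G` and equality
constraints `H`, as a function of the point `z` for fixed multipliers `u` of `G` and `v` of `H`. -/
def lagrangian (g : E → R) (G : ι → E → R) (H : κ → E → R) (u : ι → R) (v : κ → R) (z : E) : R :=
  g z + ∑ i, u i * G i z + ∑ j, v j * H j z

theorem lagrangian_of_forall_eq_zero (g : E → R) (G : ι → E → R) (u : ι → R) (v : κ → R)
    (hz : ∀ j, H j z = 0) : lagrangian g G H u v z = g z + ∑ i, u i * G i z := by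
  simp [lagrangian, hz]

variable [PartialOrder R] [IsOrderedRing R]

theorem lagrangian_le_of_mem_feasibleSet (g : E → R) (v : κ → R) (hu : 0 ≤ u)
    (hz : z ∈ feasibleSet G H) : lagrangian g G H u v z ≤ g z := by
  rw [lagrangian_of_forall_eq_zero g G u v hz.2]
  exact add_le_of_nonpos_right <|
    Finset.sum_nonpos fun i _ ↦ mul_nonpos_of_nonneg_of_nonpos (hu i) (hz.1 i)

theorem lagrangian_eq_iff_of_mem_feasibleSet [IsLeftCancelAdd R] (g : E → R) (v : κ → R)
    (hu : 0 ≤ u) (hz : z ∈ feasibleSet G H) :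
    lagrangian g G H u v z = g z ↔ ∀ i, u i * G i z = 0 := by
  rw [lagrangian_of_forall_eq_zero g G u v hz.2, add_eq_left,
    Finset.sum_eq_zero_iff_of_nonpos fun i _ ↦ mul_nonpos_of_nonneg_of_nonpos (hu i) (hz.1 i)]
  simp only [Finset.mem_univ, forall_const]

theorem isMinOn_feasibleSet_of_forall_le_lagrangian {g : E → R} {v : κ → R} {z₀ : E} (hu : 0 ≤ u)
    (hdual : ∀ z ∈ feasibleSet G H, g z₀ ≤ lagrangian g G H u v z) :
    IsMinOn g (feasibleSet G H) z₀ :=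
  isMinOn_iff.2 fun z hz ↦ (hdual z hz).trans (lagrangian_le_of_mem_feasibleSet g v hu hz)

end Duality

section Stationarity

variable {E ι κ : Type*} [NormedAddCommGroup E] [Fintype ι] [Fintype κ]

theorem hasFDerivAt_lagrangian {𝕜 𝔸 : Type*} [NontriviallyNormedField 𝕜] [NormedSpace 𝕜 E]
    [NormedRing 𝔸] [NormedAlgebra 𝕜 𝔸] {g : E → 𝔸} {G : ι → E → 𝔸} {H : κ → E → 𝔸}
    {g' : E →L[𝕜] 𝔸} {G' : ι → E →L[𝕜] 𝔸} {H' : κ → E →L[𝕜] 𝔸} {z : E}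
    (hg : HasFDerivAt g g' z) (hG : ∀ i, HasFDerivAt (G i) (G' i) z)
    (hH : ∀ j, HasFDerivAt (H j) (H' j) z) (u : ι → 𝔸) (v : κ → 𝔸) :
    HasFDerivAt (lagrangian g G H u v) (g' + ∑ i, u i • G' i + ∑ j, v j • H' j) z :=
  (hg.add (.fun_sum fun i _ ↦ (hG i).const_mul (u i))).add
    (.fun_sum fun j _ ↦ (hH j).const_mul (v j))

theorem stmt_11_general [NormedSpace ℝ E] {g : E → ℝ} {G : ι → E → ℝ} {H : κ → E → ℝ}
    {u : ι → ℝ} {v : κ → ℝ} {z₀ : E}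
    (hg : DifferentiableAt ℝ g z₀) (hG : ∀ i, DifferentiableAt ℝ (G i) z₀)
    (hH : ∀ j, DifferentiableAt ℝ (H j) z₀) (hz₀ : z₀ ∈ feasibleSet G H) (hu : 0 ≤ u)
    (hdual : ∀ z, g z₀ ≤ lagrangian g G H u v z) :
    (fderiv ℝ g z₀ + ∑ i, u i • fderiv ℝ (G i) z₀ + ∑ j, v j • fderiv ℝ (H j) z₀ = 0) ∧
      (∀ i, u i * G i z₀ = 0) ∧ IsMinOn g (feasibleSet G H) z₀ := by
  have lagrangian_eq : lagrangian g G H u v z₀ = g z₀ :=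
    (lagrangian_le_of_mem_feasibleSet g v hu hz₀).antisymm (hdual z₀)
  have isLocalMin_lagrangian : IsLocalMin (lagrangian g G H u v) z₀ :=
    .of_forall fun z ↦ lagrangian_eq.trans_le (hdual z)
  have hasFDerivAt := hasFDerivAt_lagrangian hg.hasFDerivAt (fun i ↦ (hG i).hasFDerivAt)
    (fun j ↦ (hH j).hasFDerivAt) u v
  exact ⟨isLocalMin_lagrangian.hasFDerivAt_eq_zero hasFDerivAt,
    (lagrangian_eq_iff_of_mem_feasibleSet g v hu hz₀).1 lagrangian_eq,
    isMinOn_feasibleSet_of_forall_le_lagrangian hu fun z _ ↦ hdual z⟩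

end Stationarity

/-- Theorem 7(ii): if the feasible point `zs` satisfies
`g zs ≤ L(z; u, v)` for all `z` (i.e. `g zs` equals the dual value `θ(u, v)`),
then stationarity and complementary slackness hold and `zs` is a global
minimizer of `g` over `X`. -/
theorem stmt_11 {n s r : ℕ}
    (g : EuclideanSpace ℝ (Fin n) → ℝ)
    (G : Fin s → EuclideanSpace ℝ (Fin n) → ℝ)
    (H : Fin r → EuclideanSpace ℝ (Fin n) → ℝ)
    (hg : ConvexOn ℝ Set.univ g) (hgd : Differentiable ℝ g)
    (hG : ∀ i, ConvexOn ℝ Set.univ (G i)) (hGd : ∀ i, Differentiable ℝ (G i))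
    (hH : ∀ j, ConvexOn ℝ Set.univ (H j)) (hHd : ∀ j, Differentiable ℝ (H j))
    (X : Set (EuclideanSpace ℝ (Fin n)))
    (hX : X = {z | (∀ i, G i z ≤ 0) ∧ (∀ j, H j z = 0)})
    (zs : EuclideanSpace ℝ (Fin n)) (hzs : zs ∈ X)
    (L : EuclideanSpace ℝ (Fin n) → ℝ)
    (u : Fin s → ℝ) (v : Fin r → ℝ) (hu : ∀ i, 0 ≤ u i)
    (hL : ∀ z, L z = g z + ∑ i, u i * G i z + ∑ j, v j * H j z)
    (hdual : ∀ z, g zs ≤ L z) :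
    (fderiv ℝ g zs + ∑ i, u i • fderiv ℝ (G i) zs
      + ∑ j, v j • fderiv ℝ (H j) zs = 0) ∧
    (∀ i, u i * G i zs = 0) ∧
    (∀ z ∈ X, g zs ≤ g z) := by
  subst hX
  obtain rfl : L = lagrangian g G H u v := funext hL
  exact stmt_11_general (hgd zs) (fun i ↦ hGd i zs) (fun j ↦ hHd j zs) hzs hu hdual
end
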